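/- For all integers q₁, q₂ > 1 and all primitive quadratic Dirichlet characters χ₁ mod q₁ and χ₂ mod q₂, the Dirichlet series coefficients a_n of f(s) satisfy: a₁ = 1, and a_n is a nonnegative real number for every positive integer n. -/

import Mathlib

open Finset

/-- The Dirichlet series coefficients of
`f(s) = ζ(s) L(s,χ₁) L(s,χ₂) L(s,χ₁χ₂)`, given explicitly by
`a n = Σ_{j k l m = n} χ₁(k) χ₂(l) χ₁(m) χ₂(m)`. -/
noncomputable def goldfeldCoeff {q₁ q₂ : ℕ} (χ₁ : DirichletCharacter ℂ q₁)
    (χ₂ : DirichletCharacter ℂ q₂) (n : ℕ) : ℂ :=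
  ∑ p ∈ n.divisorsAntidiagonal, ∑ r ∈ p.2.divisorsAntidiagonal,
    ∑ t ∈ r.2.divisorsAntidiagonal,
      χ₁ (r.1 : ZMod q₁) * χ₂ (t.1 : ZMod q₂) * χ₁ (t.2 : ZMod q₁) * χ₂ (t.2 : ZMod q₂)

/-!
Since `Λ * ζ = log`, a completely multiplicative `ψ` satisfies `log · ψ = ψ * (Λ · ψ)` under
Dirichlet convolution, and multiplication by `log` is a derivation. The coefficients of
`f = ζ · L(χ₁) · L(χ₂) · L(χ₁χ₂)` therefore satisfy
`log · a = a * (Λ · (1 + χ₁ + χ₂ + χ₁χ₂))`, which is `-f' = f · (-f'/f)` on Dirichlet series.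
The second factor `Λ · (1 + χ₁)(1 + χ₂)` is nonnegative and vanishes at `1`, so this identity gives
`0 ≤ a n` by strong induction, starting from `a 1 = 1`.
-/

open ArithmeticFunction
open scoped LSeries.notation

lemma toArithmeticFunction_apply {R : Type*} [Zero R] (f : ℕ → R) {n : ℕ} (hn : n ≠ 0) :
    toArithmeticFunction f n = f n :=
  if_neg hn

lemma arithmeticFunction_sum_apply {R ι : Type*} [AddCommMonoid R] (s : Finset ι)
    (f : ι → ArithmeticFunction R) (n : ℕ) : (∑ i ∈ s, f i) n = ∑ i ∈ s, f i n :=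
  map_sum (⟨⟨(· n), rfl⟩, fun _ _ => rfl⟩ : ArithmeticFunction R →+ R) f s

lemma derivation_prod_eq_prod_mul_sum {R A ι : Type*} [CommSemiring R] [CommSemiring A]
    [Algebra R A] (D : Derivation R A A) (s : Finset ι) {f b : ι → A}
    (h : ∀ i ∈ s, D (f i) = f i * b i) :
    D (∏ i ∈ s, f i) = (∏ i ∈ s, f i) * ∑ i ∈ s, b i := by
  induction s using Finset.cons_induction with
  | empty => simp
  | cons i s hi ih =>
    rw [forall_mem_cons] at h
    rw [prod_cons, sum_cons, D.leibniz, h.1, ih h.2, smul_eq_mul, smul_eq_mul]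
    ring

section LogDerivation

variable {R : Type*} [CommRing R] [Algebra ℝ R]

/-- Pointwise multiplication of arithmetic functions by the logarithm. -/
noncomputable def logSMul : ArithmeticFunction R →ₗ[ℝ] ArithmeticFunction R where
  toFun f := ⟨fun n => Real.log n • f n, by simp⟩
  map_add' _ _ := by ext; exact smul_add ..
  map_smul' _ _ := by ext; exact smul_comm ..

lemma logSMul_apply (f : ArithmeticFunction R) (n : ℕ) : logSMul f n = Real.log n • f n := rfl

lemma logSMul_mul (f g : ArithmeticFunction R) :
    logSMul (f * g) = f * logSMul g + g * logSMul f := by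
  ext n
  rw [mul_comm g]
  simp only [ArithmeticFunction.add_apply, ArithmeticFunction.mul_apply, logSMul_apply, smul_sum,
    ← sum_add_distrib]
  refine sum_congr rfl fun ⟨d, e⟩ hde => ?_
  obtain ⟨hd, he⟩ := Nat.ne_zero_of_mem_divisorsAntidiagonal hde
  rw [← (Nat.mem_divisorsAntidiagonal.mp hde).1, Nat.cast_mul,
    Real.log_mul (Nat.cast_ne_zero.mpr hd) (Nat.cast_ne_zero.mpr he), add_smul, smul_mul_assoc,
    mul_smul_comm, add_comm]

/-- The derivation `f ↦ log · f` of the ring of arithmetic functions under Dirichlet convolution;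
on Dirichlet series it is `-d/ds`. -/
noncomputable def logDerivation : Derivation ℝ (ArithmeticFunction R) (ArithmeticFunction R) :=
  Derivation.mk' logSMul logSMul_mul

lemma logDerivation_apply (f : ArithmeticFunction R) (n : ℕ) :
    logDerivation f n = Real.log n • f n := rfl

lemma logDerivation_toArithmeticFunction (ψ : ℕ →* R) :
    logDerivation (toArithmeticFunction ψ) =
      toArithmeticFunction ψ * toArithmeticFunction fun n => Λ n • ψ n := by
  ext n
  obtain rfl | hn := eq_or_ne n 0
  · simp
  have hψ : ∀ p ∈ n.divisorsAntidiagonal, ψ p.1 * (Λ p.2 • ψ p.2) = Λ p.2 • ψ n := fun p hp => by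
    rw [mul_smul_comm, ← map_mul, (Nat.mem_divisorsAntidiagonal.mp hp).1]
  calc logDerivation (toArithmeticFunction ψ) n
    _ = Real.log n • ψ n := by rw [logDerivation_apply, toArithmeticFunction_apply _ hn]
    _ = ∑ p ∈ n.divisorsAntidiagonal, Λ p.2 • ψ n := by
      rw [← sum_smul, Nat.sum_divisorsAntidiagonal' fun _ e => Λ e, vonMangoldt_sum]
    _ = ∑ p ∈ n.divisorsAntidiagonal, ψ p.1 * (Λ p.2 • ψ p.2) := (sum_congr rfl hψ).symm
    _ = (toArithmeticFunction ψ * toArithmeticFunction fun n => Λ n • ψ n) n :=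
      (congrFun (LSeries.convolution_def ψ fun n => Λ n • ψ n) n).symm

variable [PartialOrder R] [IsOrderedRing R] [IsOrderedModule ℝ R]

lemma nonneg_of_logDerivation_eq_mul {a b : ArithmeticFunction R} (h : logDerivation a = a * b)
    (ha : 0 ≤ a 1) (hb_one : b 1 = 0) (hb : ∀ n, 0 ≤ b n) (n : ℕ) : 0 ≤ a n := by
  induction n using Nat.strong_induction_on with
  | _ n ih =>
    obtain hn | rfl | hn := lt_trichotomy n 1
    · simp [Nat.lt_one_iff.mp hn]
    · exact ha
    have hlog : 0 < Real.log n := Real.log_pos (Nat.one_lt_cast.mpr hn)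
    have hconv : 0 ≤ (a * b) n := by
      rw [ArithmeticFunction.mul_apply]
      refine sum_nonneg fun ⟨d, e⟩ hde => ?_
      obtain ⟨hd, he⟩ := Nat.ne_zero_of_mem_divisorsAntidiagonal hde
      obtain rfl | he_one := eq_or_ne e 1
      · simp [hb_one]
      have hdn : d < n := by
        rw [← (Nat.mem_divisorsAntidiagonal.mp hde).1]
        exact lt_mul_of_one_lt_right (by lia) (by lia)
      exact mul_nonneg (ih d hdn) (hb e)
    rw [← h, logDerivation_apply] at hconv
    exact nonneg_of_smul_nonneg_of_pos_left hconv hlog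

theorem prod_toArithmeticFunction_nonneg {ι : Type*} (s : Finset ι) (ψ : ι → ℕ →* R)
    (hψ : ∀ n, IsPrimePow n → 0 ≤ ∑ i ∈ s, ψ i n) (n : ℕ) :
    0 ≤ (∏ i ∈ s, toArithmeticFunction (ψ i)) n := by
  have hsum (m : ℕ) (hm : m ≠ 0) : (∑ i ∈ s, toArithmeticFunction fun n => Λ n • ψ i n) m =
      Λ m • ∑ i ∈ s, ψ i m := by
    simp only [arithmeticFunction_sum_apply, toArithmeticFunction_apply _ hm, smul_sum]
  have hone : (∏ i ∈ s, toArithmeticFunction (ψ i)) 1 = 1 :=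
    prod_induction _ (fun f : ArithmeticFunction R => f 1 = 1) (fun f g hf hg => by simp [hf, hg])
      one_one fun i _ => by simp [toArithmeticFunction_apply]
  have hlog := derivation_prod_eq_prod_mul_sum logDerivation s fun i _ =>
    logDerivation_toArithmeticFunction (ψ i)
  refine nonneg_of_logDerivation_eq_mul hlog ?_ ?_ ?_ n
  · exact hone ▸ zero_le_one
  · simp [hsum]
  · intro m
    by_cases hm : IsPrimePow m
    · rw [hsum m hm.ne_zero]
      exact smul_nonneg vonMangoldt_nonneg (hψ m hm)
    · obtain rfl | hm_ne := eq_or_ne m 0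
      · simp
      · simp [hsum m hm_ne, vonMangoldt_eq_zero_iff.mpr hm]

end LogDerivation

section Goldfeld

variable {q q₁ q₂ : ℕ}

/-- A Dirichlet character viewed as a completely multiplicative function on `ℕ`, so that
characters of different moduli can be multiplied. -/
def natMonoidHom {R : Type*} [CommMonoidWithZero R] (χ : DirichletCharacter R q) : ℕ →* R :=
  χ.toMonoidHom.comp (Nat.castRingHom (ZMod q))

lemma natMonoidHom_apply {R : Type*} [CommMonoidWithZero R] (χ : DirichletCharacter R q) (n : ℕ) :
    natMonoidHom χ n = χ n := rfl

/-- The completely multiplicative functions `1`, `χ₁`, `χ₂`, `χ₁χ₂` whose Dirichlet series are the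
four factors of `f(s)`. -/
noncomputable def goldfeldFactor (χ₁ : DirichletCharacter ℂ q₁) (χ₂ : DirichletCharacter ℂ q₂) :
    Fin 4 → ℕ →* ℂ :=
  ![1, natMonoidHom χ₁, natMonoidHom χ₂, natMonoidHom χ₁ * natMonoidHom χ₂]

lemma goldfeldCoeff_eq_prod (χ₁ : DirichletCharacter ℂ q₁) (χ₂ : DirichletCharacter ℂ q₂) (n : ℕ) :
    goldfeldCoeff χ₁ χ₂ n = (∏ i, toArithmeticFunction (goldfeldFactor χ₁ χ₂ i)) n := by
  have hconv : (1 ⍟ (natMonoidHom χ₁ ⍟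
      (natMonoidHom χ₂ ⍟ (natMonoidHom χ₁ * natMonoidHom χ₂ : ℕ →* ℂ)))) n =
      goldfeldCoeff χ₁ χ₂ n := by
    simp [LSeries.convolution_def, goldfeldCoeff, natMonoidHom_apply, mul_sum, mul_assoc]
  rw [← hconv, Fin.prod_univ_four, mul_assoc, mul_assoc]
  simp only [LSeries.convolution, toArithmeticFunction_eq_self]
  rfl

lemma sum_goldfeldFactor_apply (χ₁ : DirichletCharacter ℂ q₁) (χ₂ : DirichletCharacter ℂ q₂)
    (n : ℕ) : ∑ i, goldfeldFactor χ₁ χ₂ i n = (1 + χ₁ n) * (1 + χ₂ n) := by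
  simp only [Fin.sum_univ_four, goldfeldFactor, Matrix.cons_val, MonoidHom.one_apply,
    MonoidHom.mul_apply, natMonoidHom_apply]
  ring

open scoped ComplexOrder

lemma one_add_nonneg_of_sq_eq_one {χ : DirichletCharacter ℂ q} (hχ : χ ^ 2 = 1) (x : ZMod q) :
    0 ≤ 1 + χ x := by
  obtain h | h | h := MulChar.isQuadratic_iff_sq_eq_one.mpr hχ x <;> norm_num [h]

lemma goldfeldCoeff_nonneg {χ₁ : DirichletCharacter ℂ q₁} {χ₂ : DirichletCharacter ℂ q₂}
    (hχ₁ : χ₁ ^ 2 = 1) (hχ₂ : χ₂ ^ 2 = 1) (n : ℕ) : 0 ≤ goldfeldCoeff χ₁ χ₂ n := by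
  rw [goldfeldCoeff_eq_prod]
  refine prod_toArithmeticFunction_nonneg univ _ (fun m _ => ?_) n
  rw [sum_goldfeldFactor_apply]
  exact mul_nonneg (one_add_nonneg_of_sq_eq_one hχ₁ m) (one_add_nonneg_of_sq_eq_one hχ₂ m)

theorem goldfeldCoeff_one_and_nonneg_general {χ₁ : DirichletCharacter ℂ q₁}
    {χ₂ : DirichletCharacter ℂ q₂} (hχ₁ : χ₁ ^ 2 = 1) (hχ₂ : χ₂ ^ 2 = 1) :
    goldfeldCoeff χ₁ χ₂ 1 = 1 ∧
      ∀ n : ℕ, 0 < n → ∃ r : ℝ, goldfeldCoeff χ₁ χ₂ n = (r : ℂ) ∧ 0 ≤ r := by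
  refine ⟨by simp [goldfeldCoeff], fun n _ => ?_⟩
  obtain ⟨r, hr, hrn⟩ := RCLike.nonneg_iff_exists_ofReal.mp (goldfeldCoeff_nonneg hχ₁ hχ₂ n)
  exact ⟨r, hrn.symm, hr⟩

end Goldfeld

/-- `a 1 = 1` and every `a n` is a nonnegative real number. -/
theorem goldfeldCoeff_one_and_nonneg (q₁ q₂ : ℕ) (hq₁ : 1 < q₁) (hq₂ : 1 < q₂)
    (χ₁ : DirichletCharacter ℂ q₁) (χ₂ : DirichletCharacter ℂ q₂)
    (hχ₁ : χ₁.IsPrimitive) (hχ₁' : χ₁ ≠ 1) (hχ₁'' : χ₁ ^ 2 = 1)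
    (hχ₂ : χ₂.IsPrimitive) (hχ₂' : χ₂ ≠ 1) (hχ₂'' : χ₂ ^ 2 = 1) :
    goldfeldCoeff χ₁ χ₂ 1 = 1 ∧
      ∀ n : ℕ, 0 < n → ∃ r : ℝ, goldfeldCoeff χ₁ χ₂ n = (r : ℂ) ∧ 0 ≤ r :=
  goldfeldCoeff_one_and_nonneg_general hχ₁'' hχ₂''
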